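/- arXiv:2602.13822 — 2 statements merged into one kernel-verified Lean document; each statement's English description precedes it below -/
import Mathlib

section
/- Let n ≥ 1, s ∈ (0,1) with n ≤ 2s (so n = 1 and s ≥ 1/2), and let K be an admissible kernel. Then for every q > 1, every nonnegative weak supersolution u of L_K u = u^q in ℝⁿ satisfies u = 0 almost everywhere in ℝⁿ. -/
open MeasureTheory Metric

noncomputable section

abbrev Euc (n : ℕ) := EuclideanSpace ℝ (Fin n)

def IsAdmissibleKernel (n : ℕ) (s lam Lam : ℝ) (K : Euc n → ℝ) : Prop :=
  0 < lam ∧ lam ≤ Lam ∧ Measurable K ∧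
  (∀ z : Euc n, z ≠ 0 → K z = K (-z)) ∧
  (∀ z : Euc n, z ≠ 0 →
    lam * ‖z‖ ^ (-(n : ℝ) - 2 * s) ≤ K z ∧ K z ≤ Lam * ‖z‖ ^ (-(n : ℝ) - 2 * s))

def LK (n : ℕ) (K φ : Euc n → ℝ) (x : Euc n) : ℝ :=
  (1 / 2) * ∫ z : Euc n, (2 * φ x - φ (x + z) - φ (x - z)) * K z

def IsTestFun (n : ℕ) (φ : Euc n → ℝ) : Prop :=
  ContDiff ℝ (⊤ : ℕ∞) φ ∧ HasCompactSupport φ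

def MemL1Tail (n : ℕ) (s : ℝ) (u : Euc n → ℝ) : Prop :=
  LocallyIntegrable u volume ∧
  Integrable (fun x : Euc n => |u x| * (1 + ‖x‖) ^ (-(n : ℝ) - 2 * s)) volume

def MemLqLoc (n : ℕ) (q : ℝ) (u : Euc n → ℝ) : Prop :=
  ∀ R : ℝ, 0 < R → IntegrableOn (fun x : Euc n => u x ^ q) (ball (0 : Euc n) R) volume

def IsWeakSupersol (n : ℕ) (s q : ℝ) (K u : Euc n → ℝ) : Prop :=
  Measurable u ∧ (∀ x, 0 ≤ u x) ∧ MemLqLoc n q u ∧ MemL1Tail n s u ∧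
  ∀ φ : Euc n → ℝ, IsTestFun n φ → (∀ x, 0 ≤ φ x) →
    (∫ x : Euc n, u x ^ q * φ x) ≤ ∫ x : Euc n, u x * LK n K φ x

def IsCutoff (n : ℕ) (η : Euc n → ℝ) : Prop :=
  ContDiff ℝ (⊤ : ℕ∞) η ∧ (∀ x, 0 ≤ η x ∧ η x ≤ 1) ∧
  (∀ x : Euc n, ‖x‖ ≤ 1 → η x = 1) ∧ (∀ x : Euc n, 2 ≤ ‖x‖ → η x = 0)

def cutoffSq (n : ℕ) (η : Euc n → ℝ) (R : ℝ) : Euc n → ℝ :=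
  fun x => (η (R⁻¹ • x)) ^ 2

lemma pow_tangent (m : ℕ) (a b : ℝ) (ha : 0 ≤ a) (hb : 0 ≤ b) :
    a ^ (m+1) + (m+1) * a ^ m * (b - a) ≤ b ^ (m+1) := by
  induction m with
  | zero => simp
  | succ k ih =>
    have h1 := mul_le_mul_of_nonneg_left ih hb
    have h2 : 0 ≤ (k+1) * a ^ k * (b - a)^2 := by positivity
    push_cast
    have e1 : b ^ (k+1+1) = b * b^(k+1) := by ring
    rw [e1]
    refine le_trans ?_ h1
    have : b * (a ^ (k + 1) + (↑k + 1) * a ^ k * (b - a)) - (a ^ (k + 1 + 1) + (↑k + 1 + 1) * a ^ (k + 1) * (b - a)) = (k+1) * a ^ k * (b - a)^2 := by ring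
    linarith

lemma second_diff {n : ℕ} (η : Euc n → ℝ) (h1 : ContDiff ℝ (⊤ : ℕ∞) η) (h2 : HasCompactSupport η) :
    ∃ M : ℝ, 0 ≤ M ∧ ∀ x z, |2 * η x - η (x + z) - η (x - z)| ≤ M * ‖z‖^2 := by
  have hd : ContDiff ℝ 1 (fderiv ℝ η) := h1.fderiv_right (by norm_cast)
  obtain ⟨C, hC⟩ := hd.lipschitzWith_of_hasCompactSupport (h2.fderiv ℝ) one_ne_zero
  have key : ∀ x z, |η (x + z) - η x - fderiv ℝ η x z| ≤ C * ‖z‖^2 := by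
    intro x z
    have := (convex_closedBall x ‖z‖).norm_image_sub_le_of_norm_hasFDerivWithin_le'
      (f := η) (f' := fderiv ℝ η) (φ := fderiv ℝ η x) (C := C * ‖z‖) (x := x) (y := x + z)
      (fun y _ => ((h1.differentiable (by simp)) y).hasFDerivAt.hasFDerivWithinAt)
      (fun y hy => by
        refine (hC.norm_sub_le y x).trans ?_
        gcongr
        simpa [dist_eq_norm] using hy)
      (by simp) (by simp)
    simp only [add_sub_cancel_left, Real.norm_eq_abs] at this
    calc _ ≤ _ := this
      _ = _ := by ring
  refine ⟨2 * C, by positivity, fun x z => ?_⟩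
  have a := abs_le.1 (key x z)
  have b := abs_le.1 (key x (-z))
  simp only [map_neg, norm_neg, ← sub_eq_add_neg] at b
  rw [abs_le]
  constructor <;> linarith [a.1, a.2, b.1, b.2]

lemma g_int {n : ℕ} (hn : 1 ≤ n) (s : ℝ) (hs : s ∈ Set.Ioo (0 : ℝ) 1) (M : ℝ) (hM : 0 ≤ M) :
    Integrable (fun w : Euc n => min 4 (M * ‖w‖^2) * ‖w‖ ^ (-(n : ℝ) - 2 * s)) volume := by
  have : Nonempty (Fin n) := ⟨⟨0, hn⟩⟩
  have := (integrable_fun_norm_addHaar (E := Euc n) volume (f := fun y : ℝ => min 4 (M * y^2) * y ^ (-(n : ℝ) - 2 * s)))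
  rw [this]
  have hm : Measurable (fun y : ℝ => y ^ (Module.finrank ℝ (Euc n) - 1) • (min 4 (M * y^2) * y ^ (-(n : ℝ) - 2 * s))) := by
    fun_prop
  have hp : ∀ y : ℝ, 0 < y → y ^ (n-1) * y ^ (-(n : ℝ) - 2 * s) = y ^ (-1 - 2*s) := by
    intro y hy
    rw [← Real.rpow_natCast, ← Real.rpow_add hy]
    congr 1
    push_cast [Nat.cast_sub hn]
    ring
  rw [← Set.Ioc_union_Ioi_eq_Ioi (zero_le_one), integrableOn_union]
  obtain ⟨s0, s1⟩ := hs
  constructor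
  · have h1 : IntegrableOn (fun y : ℝ => M * y ^ (1 - 2*s)) (Set.Ioc 0 1) := by
      have := (intervalIntegral.intervalIntegrable_rpow' (a := 0) (b := 1) (r := 1 - 2*s) (by linarith)).1
      exact this.const_mul M
    refine Integrable.mono' h1 hm.aestronglyMeasurable ?_
    filter_upwards [ae_restrict_mem measurableSet_Ioc] with y hy
    have hy0 := hy.1
    rw [Real.norm_eq_abs, abs_of_nonneg (by simp only [smul_eq_mul]; positivity)]
    simp only [finrank_euclideanSpace, Fintype.card_fin, smul_eq_mul]
    calc _ = min 4 (M*y^2) * (y ^ (n-1) * y ^ (-(n : ℝ) - 2 * s)) := by ring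
      _ ≤ M * y^2 * y ^ (-1-2*s) := by
        rw [hp y hy0]; gcongr; exact min_le_right _ _
      _ = M * y ^ (1 - 2*s) := by
        rw [mul_assoc, ← Real.rpow_natCast, ← Real.rpow_add hy0]; congr 2; push_cast; ring
  · have h1 : IntegrableOn (fun y : ℝ => 4 * y ^ (-1 - 2*s)) (Set.Ioi 1) :=
      (integrableOn_Ioi_rpow_of_lt (by linarith) one_pos).const_mul 4
    refine Integrable.mono' h1 hm.aestronglyMeasurable ?_
    filter_upwards [ae_restrict_mem measurableSet_Ioi] with y hy
    have hy0 : 0 < y := one_pos.trans hy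
    rw [Real.norm_eq_abs, abs_of_nonneg (by simp only [smul_eq_mul]; positivity)]
    simp only [finrank_euclideanSpace, Fintype.card_fin, smul_eq_mul]
    calc _ = min 4 (M*y^2) * (y ^ (n-1) * y ^ (-(n : ℝ) - 2 * s)) := by ring
      _ ≤ 4 * y ^ (-1-2*s) := by
        rw [hp y hy0]; gcongr; exact min_le_left _ _

lemma integral_le_of_le {α : Type*} [MeasurableSpace α] {μ : Measure α} {f g : α → ℝ}
    (hg : Integrable g μ) (hg0 : 0 ≤ᵐ[μ] g) (h : f ≤ᵐ[μ] g) : ∫ x, f x ∂μ ≤ ∫ x, g x ∂μ := by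
  by_cases hf : Integrable f μ
  · exact integral_mono_ae hf hg h
  · rw [integral_undef hf]; exact integral_nonneg_of_ae hg0

lemma LK_bound {n : ℕ} (hn : 1 ≤ n) (s : ℝ) (hs : s ∈ Set.Ioo (0 : ℝ) 1)
    (lam Lam : ℝ) (K : Euc n → ℝ) (hK : IsAdmissibleKernel n s lam Lam K)
    (η : Euc n → ℝ) (h1 : ContDiff ℝ (⊤ : ℕ∞) η) (h2 : HasCompactSupport η)
    (h01 : ∀ x, 0 ≤ η x ∧ η x ≤ 1) (m : ℕ) :
    ∃ A : ℝ, 0 ≤ A ∧ ∀ R : ℝ, 0 < R → ∀ x,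
      LK n K (fun x => η (R⁻¹ • x) ^ (m+1)) x ≤ A * R ^ (-(2 * s)) * η (R⁻¹ • x) ^ m := by
  obtain ⟨M, hM, hMb⟩ := second_diff η h1 h2
  have : Nonempty (Fin n) := ⟨⟨0, hn⟩⟩
  obtain ⟨hl, hlL, hKm, -, hKb⟩ := hK
  have hL : 0 ≤ Lam := hl.le.trans hlL
  set g := (fun w : Euc n => min 4 (M * ‖w‖^2) * ‖w‖ ^ (-(n : ℝ) - 2 * s)) with hg
  have gi : Integrable g := g_int hn s hs M hM
  have g0 : ∀ w, 0 ≤ g w := fun w => by simp only [hg]; positivity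
  refine ⟨(1/2) * ((m+1) * Lam * ∫ w, g w), ?_, ?_⟩
  · have : 0 ≤ ∫ w, g w := integral_nonneg (fun w => g0 w)
    positivity
  intro R hR x
  have hηx := (h01 (R⁻¹ • x)).1
  set c := (m+1) * η (R⁻¹ • x) ^ m * Lam * R ^ (-(n : ℝ) - 2 * s) with hc
  have hc0 : 0 ≤ c := by positivity
  have hint : Integrable (fun z : Euc n => c * g (R⁻¹ • z)) :=
    (gi.comp_smul (inv_ne_zero hR.ne')).const_mul c
  have hmain : ∫ z : Euc n, (2 * η (R⁻¹ • x) ^ (m+1) - η (R⁻¹ • (x + z)) ^ (m+1) - η (R⁻¹ • (x - z)) ^ (m+1)) * K z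
      ≤ ∫ z : Euc n, c * g (R⁻¹ • z) := by
    refine integral_le_of_le hint (Filter.Eventually.of_forall fun z => mul_nonneg hc0 (g0 _)) ?_
    have : ∀ᵐ z : Euc n, z ≠ 0 := by simp [ae_iff]
    filter_upwards [this] with z hz
    obtain ⟨k1, k2⟩ := hKb z hz
    have hz0 : 0 < ‖z‖ := norm_pos_iff.2 hz
    have k0 : 0 ≤ K z := le_trans (by positivity) k1
    simp only [smul_add, smul_sub]
    set a := R⁻¹ • x
    set w := R⁻¹ • z with hw
    have hzw : ‖z‖ ^ (-(n : ℝ) - 2 * s) = R ^ (-(n : ℝ) - 2 * s) * ‖w‖ ^ (-(n : ℝ) - 2 * s) := by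
      rw [← Real.mul_rpow hR.le (norm_nonneg _)]
      congr 1
      rw [hw, norm_smul, Real.norm_eq_abs, abs_of_pos (inv_pos.2 hR)]
      field_simp
    have t1 := pow_tangent m (η a) (η (a + w)) (h01 _).1 (h01 _).1
    have t2 := pow_tangent m (η a) (η (a - w)) (h01 _).1 (h01 _).1
    have d1 : 2 * η a - η (a + w) - η (a - w) ≤ min 4 (M * ‖w‖^2) := by
      refine le_min ?_ ((le_abs_self _).trans (hMb a w))
      linarith [(h01 a).2, (h01 (a+w)).1, (h01 (a-w)).1]
    calc _ ≤ ((m+1) * η a ^ m * min 4 (M * ‖w‖^2)) * (Lam * ‖z‖ ^ (-(n : ℝ) - 2 * s)) := by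
          apply mul_le_mul _ k2 k0 (by positivity)
          calc _ ≤ (m+1) * η a ^ m * (2 * η a - η (a + w) - η (a - w)) := by linarith
            _ ≤ _ := by gcongr
      _ = _ := by rw [hzw, hc, hg]; ring
  unfold LK
  calc _ ≤ (1/2) * ∫ z : Euc n, c * g (R⁻¹ • z) := by gcongr
    _ = _ := by
      rw [integral_const_mul, Measure.integral_comp_smul]
      simp only [finrank_euclideanSpace, Fintype.card_fin, smul_eq_mul, inv_pow, inv_inv]
      rw [abs_of_pos (by positivity), hc]
      have : R ^ (-(2*s)) = R ^ (-(n : ℝ) - 2 * s) * R ^ n := by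
        rw [← Real.rpow_natCast, ← Real.rpow_add hR]; congr 1; ring
      rw [this]; ring

/-- Liouville theorem in the low dimensional case `n ≤ 2s`, for every `q > 1`. -/
theorem liouville_low_dimension
    (n : ℕ) (hn : 1 ≤ n) (s : ℝ) (hs : s ∈ Set.Ioo (0 : ℝ) 1)
    (hns : (n : ℝ) ≤ 2 * s)
    (lam Lam : ℝ) (K : Euc n → ℝ) (hK : IsAdmissibleKernel n s lam Lam K)
    (q : ℝ) (hq : 1 < q)
    (u : Euc n → ℝ) (hu : IsWeakSupersol n s q K u) :
    ∀ᵐ x : Euc n, u x = 0 := by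
  have : Nonempty (Fin n) := ⟨⟨0, hn⟩⟩
  obtain ⟨hum, hu0, huq, ⟨hul, -⟩, hsup⟩ := hu
  let b : ContDiffBump (0 : Euc n) := ⟨1, 2, one_pos, one_lt_two⟩
  set η : Euc n → ℝ := fun x => b x with hη
  have h1 : ContDiff ℝ (⊤ : ℕ∞) η := b.contDiff
  have h2 : HasCompactSupport η := b.hasCompactSupport
  have h01 : ∀ x, 0 ≤ η x ∧ η x ≤ 1 := fun x => ⟨b.nonneg, b.le_one⟩
  have hin : ∀ x, ‖x‖ ≤ 1 → η x = 1 := fun x hx => b.one_of_mem_closedBall (by simpa [b] using hx)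
  have hout : ∀ x, 2 ≤ ‖x‖ → η x = 0 := fun x hx => b.zero_of_le_dist (by simpa [b] using hx)
  set p := Real.conjExponent q with hp
  have hpq : q.HolderConjugate p := Real.HolderConjugate.conjExponent hq
  obtain ⟨m, hm⟩ := exists_nat_ge (max 1 (1 / (q - 1)))
  have hm1 : (1:ℝ) ≤ m := (le_max_left _ _).trans hm
  have hm2 : (m:ℝ) + 1 ≤ m * q := by
    have := (le_max_right _ _).trans hm
    rw [div_le_iff₀ (by linarith)] at this
    linarith
  have hm0 : m ≠ 0 := by rintro rfl; norm_num at hm1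
  obtain ⟨A, hA, hAb⟩ := LK_bound hn s hs lam Lam K hK η h1 h2 h01 m
  set V := (volume : Measure (Euc n)).real (ball 0 2) with hV
  have key : ∀ R : ℝ, 0 < R → ∫ x in ball (0 : Euc n) R, u x ^ q ≤ A ^ p * V * R ^ ((n:ℝ) - 2 * s * p) := by
    intro R hR
    set e : Euc n → ℝ := fun x => η (R⁻¹ • x) with he
    have hes : ContDiff ℝ (⊤ : ℕ∞) e := h1.comp (contDiff_const_smul _)
    have hec : HasCompactSupport e := h2.comp_smul (inv_ne_zero hR.ne')
    have he01 : ∀ x, 0 ≤ e x ∧ e x ≤ 1 := fun x => h01 _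
    have hcp : ∀ k : ℕ, k ≠ 0 → HasCompactSupport (fun x => e x ^ k) := fun k hk =>
      hec.comp_left (g := fun y => y ^ k) (by simp [hk])
    have hnorm : ∀ x : Euc n, ‖R⁻¹ • x‖ = ‖x‖ / R := fun x => by
      rw [norm_smul, Real.norm_eq_abs, abs_of_pos (inv_pos.2 hR)]; field_simp
    have hein : ∀ x ∈ ball (0 : Euc n) R, e x = 1 := fun x hx => hin _ (by
      rw [hnorm, div_le_one hR]; simpa using (mem_ball_zero_iff.1 hx).le)
    have heout : ∀ x, x ∉ ball (0 : Euc n) (2 * R) → e x = 0 := fun x hx => hout _ (by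
      rw [hnorm, le_div_iff₀ hR]; simpa using hx)
    have huqm : Measurable fun x => u x ^ q := hum.pow_const q
    have hI : Integrable (fun x => u x ^ q * e x ^ (m+1)) := by
      have i1 : Integrable ((ball (0 : Euc n) (2*R)).indicator fun x => u x ^ q) :=
        (integrable_indicator_iff measurableSet_ball).2 (huq _ (by positivity))
      refine i1.mono' (huqm.mul (hes.continuous.measurable.pow_const _)).aestronglyMeasurable
        (Filter.Eventually.of_forall fun x => ?_)
      have := Real.rpow_nonneg (hu0 x) q
      have h3 := he01 x
      by_cases hx : x ∈ ball (0 : Euc n) (2*R)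
      · rw [Set.indicator_of_mem hx, Real.norm_eq_abs, abs_of_nonneg (mul_nonneg this (pow_nonneg h3.1 _))]
        exact mul_le_of_le_one_right this (pow_le_one₀ h3.1 h3.2)
      · simp [heout x hx, Set.indicator_of_notMem hx]
    have hJ : Integrable (fun x => u x * e x ^ m) := by
      simpa [mul_comm] using hul.integrable_smul_left_of_hasCompactSupport
        (hes.continuous.pow m) (hcp m hm0)
    set a := A * R ^ (-(2 * s)) with ha
    have ha0 : 0 ≤ a := by positivity
    set I := ∫ x, u x ^ q * e x ^ (m+1) with hIdef
    have s1 : I ≤ ∫ x, a * (u x * e x ^ m) := by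
      refine (hsup _ ⟨hes.pow (m+1), hcp _ (by simp)⟩ (fun x => pow_nonneg (he01 x).1 _)).trans ?_
      refine integral_le_of_le (hJ.const_mul a)
        (Filter.Eventually.of_forall fun x => mul_nonneg ha0 (mul_nonneg (hu0 x) (pow_nonneg (he01 x).1 _)))
        (Filter.Eventually.of_forall fun x => ?_)
      have := mul_le_mul_of_nonneg_left (hAb R hR x) (hu0 x)
      calc _ ≤ _ := this
        _ = _ := by ring
    have hind : Integrable ((ball (0 : Euc n) (2*R)).indicator fun _ => a ^ p / p) :=
      (integrable_indicator_iff measurableSet_ball).2 (integrableOn_const measure_ball_lt_top.ne)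
    have s2 : ∫ x, a * (u x * e x ^ m) ≤
        ∫ x, (q⁻¹ * (u x ^ q * e x ^ (m+1)) + (ball (0 : Euc n) (2*R)).indicator (fun _ => a ^ p / p) x) := by
      refine integral_mono (hJ.const_mul a) ((hI.const_mul _).add hind) fun x => ?_
      have h3 := he01 x
      by_cases hx : x ∈ ball (0 : Euc n) (2*R)
      · simp only [Set.indicator_of_mem hx]
        have y := Real.young_inequality_of_nonneg (mul_nonneg (hu0 x) (pow_nonneg h3.1 m)) ha0 hpq
        rw [mul_comm]
        refine y.trans ?_
        gcongr
        rw [div_eq_inv_mul, Real.mul_rpow (hu0 x) (pow_nonneg h3.1 m)]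
        have hq0 : 0 < q := by linarith
        have := Real.rpow_nonneg (hu0 x) q
        gcongr
        rcases h3.1.eq_or_lt with h | h
        · rw [← h]; simp [hm0, hq0.ne']
        · rw [← Real.rpow_natCast, ← Real.rpow_natCast, ← Real.rpow_mul h3.1]
          exact Real.rpow_le_rpow_of_exponent_ge h h3.2 (by push_cast; exact hm2)
      · simp [heout x hx, Set.indicator_of_notMem hx, hm0]
    rw [integral_add (hI.const_mul _) hind, integral_const_mul q⁻¹, integral_indicator measurableSet_ball,
      setIntegral_const, smul_eq_mul, ← hIdef] at s2
    have hvol : (volume : Measure (Euc n)).real (ball 0 (2*R)) = R ^ n * V := by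
      rw [hV, mul_comm 2 R, Measure.real, Measure.addHaar_ball_mul volume 0 hR.le 2, ENNReal.toReal_mul, 
        ENNReal.toReal_ofReal (by positivity)]
      simp [Measure.real]
    have hpi : p⁻¹ = 1 - q⁻¹ := by have := hpq.inv_add_inv_eq_one; linarith
    have hp0 : 0 < p := hpq.symm.pos
    have s3 : I ≤ a ^ p * (R ^ n * V) := by
      have h4 : I ≤ q⁻¹ * I + (R ^ n * V) * (a ^ p / p) := by rw [hvol] at s2; exact s1.trans s2
      have h5 : p⁻¹ * I ≤ p⁻¹ * (a ^ p * (R ^ n * V)) := by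
        have e1 : p⁻¹ * I = I - q⁻¹ * I := by rw [hpi]; ring
        have e2 : (R ^ n * V) * (a ^ p / p) = p⁻¹ * (a ^ p * (R ^ n * V)) := by ring
        linarith
      exact le_of_mul_le_mul_left h5 (by positivity)
    have s4 : ∫ x in ball (0 : Euc n) R, u x ^ q ≤ I := by
      rw [← integral_indicator measurableSet_ball]
      refine integral_mono ((integrable_indicator_iff measurableSet_ball).2 (huq R hR)) hI fun x => ?_
      by_cases hx : x ∈ ball (0 : Euc n) R
      · simp [Set.indicator_of_mem hx, hein x hx]
      · rw [Set.indicator_of_notMem hx]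
        exact mul_nonneg (Real.rpow_nonneg (hu0 x) q) (pow_nonneg (he01 x).1 _)
    refine s4.trans (s3.trans (le_of_eq ?_))
    rw [ha, Real.mul_rpow hA (by positivity), ← Real.rpow_mul hR.le, sub_eq_neg_add, Real.rpow_add hR,
      Real.rpow_natCast, neg_mul]
    ring
  have hexp : (n:ℝ) - 2 * s * p < 0 := by
    have : 1 < p := hpq.symm.lt
    nlinarith [hs.1]
  have hlim : Filter.Tendsto (fun R : ℝ => A ^ p * V * R ^ ((n:ℝ) - 2 * s * p)) Filter.atTop (nhds 0) := by
    have := (tendsto_rpow_neg_atTop (y := -((n:ℝ) - 2 * s * p)) (by linarith)).const_mul (A ^ p * V)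
    simpa using this
  have hz : ∀ r : ℝ, 0 < r → ∫ x in ball (0 : Euc n) r, u x ^ q = 0 := by
    intro r hr
    refine le_antisymm (ge_of_tendsto hlim ?_) (integral_nonneg fun x => Real.rpow_nonneg (hu0 x) q)
    filter_upwards [Filter.eventually_ge_atTop r] with R hrR
    refine le_trans ?_ (key R (hr.trans_le hrR))
    exact setIntegral_mono_set (huq R (hr.trans_le hrR))
      (Filter.Eventually.of_forall fun x => Real.rpow_nonneg (hu0 x) q)
      (ball_subset_ball hrR).eventuallyLE
  have hall : ∀ k : ℕ, ∀ᵐ x : Euc n, x ∈ ball (0 : Euc n) (k+1) → u x = 0 := by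
    intro k
    have hk : (0:ℝ) < k + 1 := by positivity
    have := (integral_eq_zero_iff_of_nonneg (fun x => Real.rpow_nonneg (hu0 x) q) (huq _ hk)).1 (hz _ hk)
    filter_upwards [(ae_restrict_iff' measurableSet_ball).1 this] with x hx hxb
    exact ((Real.rpow_eq_zero_iff_of_nonneg (hu0 x)).1 (hx hxb)).1
  filter_upwards [ae_all_iff.2 hall] with x hx
  obtain ⟨k, hk⟩ := exists_nat_ge ‖x‖
  exact hx k (by rw [mem_ball_zero_iff]; linarith)
end
end

section
/- Let n ≥ 1, s ∈ (0,1) with n > 2s, let K be an admissible kernel, and let q = n/(n−2s). If u is a nonnegative weak supersolution of L_K u = u^q in ℝⁿ, then u ∈ L^q(ℝⁿ); more precisely, sup_{R ≥ 1} ∫_{B_R} u(x)^q dx < ∞, where B_R is the open ball of radius R centered at the origin. -/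
open MeasureTheory Metric

noncomputable section

lemma aux_pow (a b : ℝ) (ha : 0 ≤ a) (hb : 0 ≤ b) (k : ℕ) :
    a ^ (k + 1) - b ^ (k + 1) ≤ (k + 1) * a ^ k * (a - b) := by
  induction k with
  | zero => simp
  | succ k ih =>
    have h1 : 0 ≤ (a ^ (k + 1) - b ^ (k + 1)) * (a - b) := by
      rcases le_total a b with h | h
      · exact mul_nonneg_of_nonpos_of_nonpos
          (sub_nonpos.2 (pow_le_pow_left₀ ha h _)) (sub_nonpos.2 h)
      · exact mul_nonneg (sub_nonneg.2 (pow_le_pow_left₀ hb h _)) (sub_nonneg.2 h)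
    have h2 := mul_le_mul_of_nonneg_left ih ha
    push_cast
    have e1 : a ^ (k + 1 + 1) = a * a ^ (k + 1) := by ring
    have e2 : b ^ (k + 1 + 1) = b * b ^ (k + 1) := by ring
    have e3 : a * ((k + 1) * a ^ k * (a - b)) = (k + 1) * a ^ (k + 1) * (a - b) := by ring
    rw [e3] at h2
    rw [e1, e2]
    nlinarith

lemma aux_second_diff (n : ℕ) (η : Euc n → ℝ) (h : ContDiff ℝ (⊤ : ℕ∞) η)
    (hc : HasCompactSupport η) :
    ∃ C : ℝ, 0 ≤ C ∧ ∀ x w : Euc n, 2 * η x - η (x + w) - η (x - w) ≤ C * ‖w‖ ^ 2 := by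
  have h1 : ContDiff ℝ 1 (fderiv ℝ η) := by
    apply h.fderiv_right
    norm_cast
  obtain ⟨L, hL⟩ := ContDiff.lipschitzWith_of_hasCompactSupport (hc.fderiv ℝ) h1 (by simp)
  have key : ∀ x w : Euc n, |η (x + w) - η x - fderiv ℝ η x w| ≤ L * ‖w‖ ^ 2 := by
    intro x w
    have := (convex_closedBall x ‖w‖).norm_image_sub_le_of_norm_fderiv_le' (𝕜 := ℝ) (f := η)
      (φ := fderiv ℝ η x) (C := L * ‖w‖) (x := x) (y := x + w)
      (fun y _ => (h.differentiable (by simp)).differentiableAt)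
      (fun y hy => by
        refine (hL.norm_sub_le y x).trans ?_
        gcongr
        simpa [dist_eq_norm] using hy)
      (by simp) (by simp)
    simp only [add_sub_cancel_left, Real.norm_eq_abs] at this
    linarith
  refine ⟨2 * L, by positivity, fun x w => ?_⟩
  have a1 := (abs_le.1 (key x w)).1
  have a2 := (abs_le.1 (key x (-w))).1
  simp only [map_neg, norm_neg, ← sub_eq_add_neg] at a2
  linarith

lemma aux_integrable (n : ℕ) (hn : 1 ≤ n) (s : ℝ) (hs : s ∈ Set.Ioo (0 : ℝ) 1) (C : ℝ)
    (hC : 0 ≤ C) :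
    Integrable (fun z : Euc n => min (C * ‖z‖ ^ 2) 2 * ‖z‖ ^ (-(n : ℝ) - 2 * s)) volume := by
  have : Nonempty (Fin n) := ⟨⟨0, hn⟩⟩
  have := (integrable_fun_norm_addHaar (volume : Measure (Euc n))
    (f := fun r : ℝ => min (C * r ^ 2) 2 * r ^ (-(n : ℝ) - 2 * s))).2
  apply this
  simp only [finrank_euclideanSpace, Fintype.card_fin, smul_eq_mul]
  have e : ∀ y : ℝ, 0 < y → y ^ (n - 1) * y ^ (-(n : ℝ) - 2 * s) = y ^ (-1 - 2 * s) := by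
    intro y hy
    rw [← Real.rpow_natCast, ← Real.rpow_add hy]
    congr 1
    push_cast [hn]
    ring
  have e2 : ∀ y : ℝ, 0 < y → y ^ 2 * y ^ (-1 - 2 * s) = y ^ (1 - 2 * s) := by
    intro y hy
    rw [← Real.rpow_natCast, ← Real.rpow_add hy]
    congr 1
    push_cast
    ring
  have hm : Measurable (fun y : ℝ => y ^ (n - 1) *
      (min (C * y ^ 2) 2 * y ^ (-(n : ℝ) - 2 * s))) := by fun_prop
  rw [← Set.Ioc_union_Ioi_eq_Ioi (zero_le_one (α := ℝ))]
  apply IntegrableOn.union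
  · have i1 : IntegrableOn (fun y : ℝ => C * y ^ (1 - 2 * s)) (Set.Ioc 0 1) := by
      have := (intervalIntegral.intervalIntegrable_rpow' (a := 0) (b := 1) (r := 1 - 2 * s)
        (by linarith [hs.2])).const_mul C
      rwa [intervalIntegrable_iff_integrableOn_Ioc_of_le zero_le_one] at this
    refine Integrable.mono' i1 hm.aestronglyMeasurable ?_
    refine (ae_restrict_iff' measurableSet_Ioc).2 (Filter.Eventually.of_forall fun y hy => ?_)
    have hy0 : 0 < y := hy.1
    rw [Real.norm_of_nonneg (by positivity), ← e2 y hy0, ← e y hy0]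
    have : min (C * y ^ 2) 2 ≤ C * y ^ 2 := min_le_left _ _
    calc _ = min (C * y ^ 2) 2 * (y ^ (n - 1) * y ^ (-(n : ℝ) - 2 * s)) := by ring
      _ ≤ (C * y ^ 2) * (y ^ (n - 1) * y ^ (-(n : ℝ) - 2 * s)) := by gcongr
      _ = _ := by ring
  · have i1 : IntegrableOn (fun y : ℝ => 2 * y ^ (-1 - 2 * s)) (Set.Ioi 1) :=
      (integrableOn_Ioi_rpow_of_lt (by linarith [hs.1]) one_pos).const_mul 2
    refine Integrable.mono' i1 hm.aestronglyMeasurable ?_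
    refine (ae_restrict_iff' measurableSet_Ioi).2 (Filter.Eventually.of_forall fun y hy => ?_)
    have hy0 : 0 < y := lt_trans one_pos hy
    rw [Real.norm_of_nonneg (by positivity), ← e y hy0]
    have : min (C * y ^ 2) 2 ≤ 2 := min_le_right _ _
    calc _ = min (C * y ^ 2) 2 * (y ^ (n - 1) * y ^ (-(n : ℝ) - 2 * s)) := by ring
      _ ≤ 2 * (y ^ (n - 1) * y ^ (-(n : ℝ) - 2 * s)) := by gcongr

lemma aux_integral_le {E : Type*} [MeasurableSpace E] {μ : Measure E} {f g : E → ℝ}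
    (hg : Integrable g μ) (hg0 : ∀ x, 0 ≤ g x) (h : ∀ x, f x ≤ g x) :
    ∫ x, f x ∂μ ≤ ∫ x, g x ∂μ := by
  by_cases hf : Integrable f μ
  · exact integral_mono hf hg h
  · rw [integral_undef hf]; exact integral_nonneg hg0

lemma aux_LK (n : ℕ) (hn : 1 ≤ n) (s : ℝ) (hs : s ∈ Set.Ioo (0 : ℝ) 1)
    (lam Lam : ℝ) (K : Euc n → ℝ) (hK : IsAdmissibleKernel n s lam Lam K)
    (η : Euc n → ℝ) (h : ContDiff ℝ (⊤ : ℕ∞) η)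
    (hc : HasCompactSupport η) (h0 : ∀ x, 0 ≤ η x) (h1 : ∀ x, η x ≤ 1) (k : ℕ) :
    ∃ C : ℝ, 0 ≤ C ∧ ∀ R : ℝ, 1 ≤ R → ∀ x,
      LK n K (fun x => η (R⁻¹ • x) ^ (k + 1)) x ≤ C * R ^ (-2 * s) * η (R⁻¹ • x) ^ k := by
  obtain ⟨C, hC, hd⟩ := aux_second_diff n η h hc
  obtain ⟨hl, hlL, -, -, hKb⟩ := hK
  have hL : 0 < Lam := by linarith
  set g : Euc n → ℝ := fun z => min (C * ‖z‖ ^ 2) 2 * ‖z‖ ^ (-(n : ℝ) - 2 * s) with hg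
  have hgi : Integrable g volume := aux_integrable n hn s hs C hC
  have hg0 : ∀ z, 0 ≤ g z := fun z => by positivity
  refine ⟨(1 / 2) * ((k + 1) * Lam * ∫ z, g z), ?_, fun R hR x => ?_⟩
  · have := integral_nonneg (μ := volume) (f := g) hg0
    positivity
  have hR0 : 0 < R := by linarith
  set A : ℝ := (k + 1) * η (R⁻¹ • x) ^ k * Lam * R ^ (-(n : ℝ) - 2 * s) with hA
  have hx0 := h0 (R⁻¹ • x)
  have hA0 : 0 ≤ A := by positivity
  have hgi' : Integrable (fun z => A * g (R⁻¹ • z)) volume :=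
    ((integrable_comp_smul_iff volume g (inv_ne_zero hR0.ne')).2 hgi).const_mul A
  have hmain : ∀ z : Euc n, (2 * η (R⁻¹ • x) ^ (k + 1) - η (R⁻¹ • (x + z)) ^ (k + 1)
      - η (R⁻¹ • (x - z)) ^ (k + 1)) * K z ≤ A * g (R⁻¹ • z) := by
    intro z
    by_cases hz : z = 0
    · subst hz
      have : (2 * η (R⁻¹ • x) ^ (k + 1) - η (R⁻¹ • (x + 0)) ^ (k + 1)
        - η (R⁻¹ • (x - 0)) ^ (k + 1)) = 0 := by simp only [add_zero, sub_zero]; ring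
      rw [this, zero_mul]
      exact mul_nonneg hA0 (hg0 _)
    have hzn : 0 < ‖z‖ := norm_pos_iff.2 hz
    obtain ⟨hk1, hk2⟩ := hKb z hz
    have hKz : 0 ≤ K z := le_trans (by positivity) hk1
    set w := R⁻¹ • z with hw
    have p1 := aux_pow (η (R⁻¹ • x)) (η (R⁻¹ • (x + z))) hx0 (h0 _) k
    have p2 := aux_pow (η (R⁻¹ • x)) (η (R⁻¹ • (x - z))) hx0 (h0 _) k
    have d1 := hd (R⁻¹ • x) w
    rw [hw, ← smul_add, ← smul_sub, ← hw] at d1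
    have d2 : 2 * η (R⁻¹ • x) - η (R⁻¹ • (x + z)) - η (R⁻¹ • (x - z)) ≤ 2 := by
      linarith [h1 (R⁻¹ • x), h0 (R⁻¹ • (x + z)), h0 (R⁻¹ • (x - z))]
    have d3 := le_min d1 d2
    have q0 : 0 ≤ ((k : ℝ) + 1) * η (R⁻¹ • x) ^ k := by positivity
    have q1 := mul_le_mul_of_nonneg_left d3 q0
    have e : ‖z‖ ^ (-(n : ℝ) - 2 * s) = R ^ (-(n : ℝ) - 2 * s) * ‖w‖ ^ (-(n : ℝ) - 2 * s) := by
      rw [← Real.mul_rpow hR0.le (norm_nonneg _), hw, norm_smul, Real.norm_of_nonneg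
        (inv_nonneg.2 hR0.le), mul_inv_cancel_left₀ hR0.ne']
    calc _ ≤ (((k : ℝ) + 1) * η (R⁻¹ • x) ^ k * min (C * ‖w‖ ^ 2) 2) * K z := by
          apply mul_le_mul_of_nonneg_right _ hKz
          linarith
      _ ≤ (((k : ℝ) + 1) * η (R⁻¹ • x) ^ k * min (C * ‖w‖ ^ 2) 2) *
          (Lam * ‖z‖ ^ (-(n : ℝ) - 2 * s)) := by
          apply mul_le_mul_of_nonneg_left hk2
          positivity
      _ = A * g w := by rw [e, hA, hg]; ring
  have hfin := aux_integral_le hgi' (fun z => mul_nonneg hA0 (hg0 _)) hmain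
  rw [integral_const_mul, Measure.integral_comp_inv_smul_of_nonneg volume g hR0.le,
    finrank_euclideanSpace, Fintype.card_fin, smul_eq_mul] at hfin
  have e : R ^ (-(n : ℝ) - 2 * s) * R ^ n = R ^ (-2 * s) := by
    rw [← Real.rpow_natCast, ← Real.rpow_add hR0]
    congr 1
    ring
  unfold LK
  calc _ ≤ 1 / 2 * (A * (R ^ n * ∫ z, g z)) := by gcongr
    _ = _ := by rw [hA, ← e]; ring

/-- In the critical case `q = n/(n-2s)`, any nonnegative weak supersolution
belongs to `L^q(ℝ^n)`; more precisely the local masses `∫_{B_R} u^q` are uniformly bounded. -/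
theorem critical_global_Lq
    (n : ℕ) (hn : 1 ≤ n) (s : ℝ) (hs : s ∈ Set.Ioo (0 : ℝ) 1)
    (hns : 2 * s < (n : ℝ))
    (lam Lam : ℝ) (K : Euc n → ℝ) (hK : IsAdmissibleKernel n s lam Lam K)
    (q : ℝ) (hq : q = (n : ℝ) / ((n : ℝ) - 2 * s))
    (u : Euc n → ℝ) (hu : IsWeakSupersol n s q K u) :
    Integrable (fun x : Euc n => u x ^ q) volume ∧
    ∃ C : ℝ, ∀ R : ℝ, 1 ≤ R →
      (∫ x in ball (0 : Euc n) R, u x ^ q) ≤ C := by 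
  obtain ⟨hum, hu0, huq, -, hsup⟩ := hu
  have hs0 : 0 < s := hs.1
  have hn0 : (0 : ℝ) < n := by exact_mod_cast hn
  have hq1 : 1 < q := by
    rw [hq, lt_div_iff₀ (by linarith)]; linarith
  have hq0 : 0 < q := by linarith
  set p : ℝ := (n : ℝ) / (2 * s) with hp
  have hp0 : 0 < p := by positivity
  have hpq : q.HolderConjugate p := by
    rw [Real.holderConjugate_iff]
    refine ⟨hq1, ?_⟩
    rw [hq, hp, inv_div, inv_div]
    field_simp
    ring
  obtain ⟨k, hk⟩ := exists_nat_ge (1 / (q - 1))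
  have hk0 : k ≠ 0 := by
    rintro rfl
    have : 0 < 1 / (q - 1) := by apply one_div_pos.2; linarith
    push_cast at hk
    linarith
  have hkq : (k : ℝ) + 1 ≤ k * q := by
    rw [div_le_iff₀ (by linarith)] at hk
    linarith
  let b : ContDiffBump (0 : Euc n) := ⟨1, 2, one_pos, one_lt_two⟩
  obtain ⟨η, hη⟩ : ∃ η : Euc n → ℝ, η = b := ⟨_, rfl⟩
  have ηs : ContDiff ℝ (⊤ : ℕ∞) η := by rw [hη]; exact b.contDiff
  have ηc : HasCompactSupport η := by rw [hη]; exact b.hasCompactSupport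
  have η0 : ∀ x, 0 ≤ η x := fun x => by rw [hη]; exact b.nonneg
  have η1 : ∀ x, η x ≤ 1 := fun x => by rw [hη]; exact b.le_one
  have ηone : ∀ x, ‖x‖ ≤ 1 → η x = 1 := fun x hx => by
    rw [hη]; exact b.one_of_mem_closedBall (by simpa using hx)
  have ηzero : ∀ x, 2 ≤ ‖x‖ → η x = 0 := fun x hx => by
    rw [hη]; exact b.zero_of_le_dist (by simpa using hx)
  obtain ⟨C, hC, hLK⟩ := aux_LK n hn s hs lam Lam K hK η ηs ηc η0 η1 k
  set V : ℝ := volume.real (ball (0 : Euc n) 2) with hV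
  have hbound : ∀ R : ℝ, 1 ≤ R → (∫ x in ball (0 : Euc n) R, u x ^ q) ≤ C ^ p * V := by
    intro R hR
    have hR0 : 0 < R := by linarith
    have nrm : ∀ x : Euc n, ‖R⁻¹ • x‖ = R⁻¹ * ‖x‖ := fun x => by
      rw [norm_smul, Real.norm_of_nonneg (inv_nonneg.2 hR0.le)]
    have ηR0 : ∀ x, x ∉ ball (0 : Euc n) (R * 2) → η (R⁻¹ • x) = 0 := by
      intro x hx
      apply ηzero
      rw [mem_ball_zero_iff, not_lt] at hx
      rw [nrm, inv_mul_eq_div, le_div_iff₀ hR0]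
      linarith
    have ηR1 : ∀ x, x ∈ ball (0 : Euc n) R → η (R⁻¹ • x) = 1 := by
      intro x hx
      apply ηone
      rw [mem_ball_zero_iff] at hx
      rw [nrm, inv_mul_eq_div, div_le_one hR0]
      exact hx.le
    have ηRs : ContDiff ℝ (⊤ : ℕ∞) (fun x : Euc n => η (R⁻¹ • x)) :=
      ηs.comp (contDiff_const_smul _)
    set φ : Euc n → ℝ := fun x => η (R⁻¹ • x) ^ (k + 1) with hφ
    have φs : ContDiff ℝ (⊤ : ℕ∞) φ := ηRs.pow _
    have φc : HasCompactSupport φ := by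
      apply HasCompactSupport.intro (isCompact_closedBall (0 : Euc n) (R * 2))
      intro x hx
      have : η (R⁻¹ • x) = 0 := ηR0 x fun h => hx (ball_subset_closedBall h)
      simp [hφ, this]
    have φ0 : ∀ x, 0 ≤ φ x := fun x => pow_nonneg (η0 _) _
    have φ1 : ∀ x, φ x ≤ 1 := fun x => pow_le_one₀ (η0 _) (η1 _)
    have φz : ∀ x, x ∉ ball (0 : Euc n) (R * 2) → φ x = 0 := fun x hx => by
      simp [hφ, ηR0 x hx]
    have huq0 : ∀ x, 0 ≤ u x ^ q := fun x => Real.rpow_nonneg (hu0 x) _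
    have hJi : Integrable (fun x => u x ^ q * φ x) volume := by
      have i1 : Integrable ((ball (0 : Euc n) (R * 2)).indicator fun x => u x ^ q) volume :=
        (integrable_indicator_iff measurableSet_ball).2 (huq (R * 2) (by positivity))
      refine i1.mono' ((hum.pow_const q).mul φs.continuous.measurable).aestronglyMeasurable ?_
      refine Filter.Eventually.of_forall fun x => ?_
      rw [Real.norm_of_nonneg (mul_nonneg (huq0 x) (φ0 x))]
      by_cases hx : x ∈ ball (0 : Euc n) (R * 2)
      · rw [Set.indicator_of_mem hx]
        exact mul_le_of_le_one_right (huq0 x) (φ1 x)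
      · rw [Set.indicator_of_notMem hx, φz x hx, mul_zero]
    have hJ := hsup φ ⟨φs, φc⟩ φ0
    set J := ∫ x, u x ^ q * φ x with hJdef
    set B : ℝ := C * R ^ (-2 * s) with hB
    have hB0 : 0 ≤ B := by positivity
    have hconst : Integrable ((ball (0 : Euc n) (R * 2)).indicator
        fun _ => B ^ p / p) volume :=
      (integrable_indicator_iff measurableSet_ball).2
        (integrableOn_const measure_ball_lt_top.ne)
    have hG := hJi.div_const q
    have hle := aux_integral_le (μ := volume) (f := fun x => u x * LK n K φ x) (hG.add hconst)
      (fun x => by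
        simp only [Pi.add_apply]
        apply add_nonneg
        · exact div_nonneg (mul_nonneg (huq0 x) (φ0 x)) hq0.le
        · exact Set.indicator_nonneg (fun _ _ => by positivity) _)
      (fun x => by
        simp only [Pi.add_apply]
        have l1 := mul_le_mul_of_nonneg_left (hLK R hR x) (hu0 x)
        refine l1.trans ?_
        by_cases hx : x ∈ ball (0 : Euc n) (R * 2)
        · rw [Set.indicator_of_mem hx]
          set t := η (R⁻¹ • x) with ht
          have ht0 : 0 ≤ t := η0 _
          have ht1 : t ≤ 1 := η1 _
          have y := Real.young_inequality_of_nonneg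
            (mul_nonneg (hu0 x) (pow_nonneg ht0 k)) hB0 hpq
          have y2 : (u x * t ^ k) ^ q ≤ u x ^ q * φ x := by
            rw [Real.mul_rpow (hu0 x) (pow_nonneg ht0 k)]
            apply mul_le_mul_of_nonneg_left _ (huq0 x)
            rw [← Real.rpow_natCast, ← Real.rpow_mul ht0]
            have : φ x = t ^ ((k : ℝ) + 1) := by
              rw [← Nat.cast_succ, Real.rpow_natCast]
            rw [this]
            exact Real.rpow_le_rpow_of_exponent_ge' ht0 ht1 (by positivity) hkq
          calc u x * (B * t ^ k) = u x * t ^ k * B := by ring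
            _ ≤ (u x * t ^ k) ^ q / q + B ^ p / p := y
            _ ≤ _ := by gcongr
        · rw [Set.indicator_of_notMem hx, ηR0 x hx, zero_pow hk0, φz x hx]
          simp)
    have hint : ∫ x, ((fun x => u x ^ q * φ x / q) + (ball (0 : Euc n) (R * 2)).indicator
        fun _ => B ^ p / p) x = J / q + C ^ p * V / p := by
      simp only [Pi.add_apply]
      rw [integral_add hG hconst, integral_div, integral_indicator measurableSet_ball,
        setIntegral_const, smul_eq_mul]
      congr 1
      have v : volume.real (ball (0 : Euc n) (R * 2)) = R ^ n * V := by
        rw [hV, measureReal_def, Measure.addHaar_ball_mul_of_pos volume _ hR0,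
          finrank_euclideanSpace, Fintype.card_fin, ENNReal.toReal_mul,
          ENNReal.toReal_ofReal (by positivity), measureReal_def]
      have b : B ^ p * R ^ n = C ^ p := by
        rw [hB, Real.mul_rpow hC (by positivity), ← Real.rpow_mul hR0.le, mul_assoc,
          ← Real.rpow_natCast, ← Real.rpow_add hR0]
        have : -2 * s * p + n = 0 := by rw [hp]; field_simp; ring
        rw [this, Real.rpow_zero, mul_one]
      rw [v, ← b]
      ring
    have hJ2 : J ≤ J / q + C ^ p * V / p := by
      rw [← hint]
      exact hJ.trans hle
    have hJ3 : J ≤ C ^ p * V := by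
      have e1 : J = J / q + J / p := by
        rw [div_eq_mul_inv, div_eq_mul_inv, ← mul_add, hpq.inv_add_inv_eq_one, mul_one]
      have e2 : J / p ≤ C ^ p * V / p := by linarith
      exact (div_le_div_iff_of_pos_right hp0).1 e2
    refine le_trans ?_ hJ3
    calc (∫ x in ball (0 : Euc n) R, u x ^ q) = ∫ x in ball (0 : Euc n) R, u x ^ q * φ x := by
          apply setIntegral_congr_fun measurableSet_ball
          intro x hx
          simp [hφ, ηR1 x hx]
      _ ≤ J := setIntegral_le_integral hJi
          (Filter.Eventually.of_forall fun x => mul_nonneg (huq0 x) (φ0 x))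
  refine ⟨?_, _, hbound⟩
  have hcov : AECover (volume : Measure (Euc n)) Filter.atTop
      (fun i : ℕ => ball (0 : Euc n) ((i : ℝ) + 1)) :=
    aecover_ball (Filter.tendsto_atTop_add_const_right _ _ tendsto_natCast_atTop_atTop)
  exact hcov.integrable_of_integral_bounded_of_nonneg_ae (C ^ p * V)
    (fun i => huq _ (by positivity))
    (Filter.Eventually.of_forall fun x => Real.rpow_nonneg (hu0 x) _)
    (Filter.Eventually.of_forall fun i => hbound _ (by
      have : (0 : ℝ) ≤ i := Nat.cast_nonneg i
      linarith))
end
end
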